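/- Let S and S' be self-similar Jordan zippers in ℝ^n with the same signature, with similarity ratios p_i and q_i respectively, and let f : γ → γ' be the homeomorphism agreeing with S and S'. Suppose α = log q_i / log p_i for some index i, with α = min over j of min(log p_j / log q_j, log q_j / log p_j). Then for the points x_k = S_i^k(z_0) and y_k = S_i^k(z_m) (k ∈ ℕ), one has ‖f(x_k) − f(y_k)‖ = M_0 ‖x_k − y_k‖^α where M_0 = ‖z'_m − z'_0‖ / ‖z_m − z_0‖^α. In particular, α is the optimal (largest possible) Hölder exponent for f. -/

import Mathlib

open Set Metric

/-- `S i`, for `i < m`, is a contracting similarity with ratio `r i ∈ (0,1)`. -/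
def IsSimilaritySystem {X : Type*} [MetricSpace X] (m : ℕ)
    (S : ℕ → X → X) (r : ℕ → ℝ) : Prop :=
  ∀ i < m, 0 < r i ∧ r i < 1 ∧ ∀ x y, dist (S i x) (S i y) = r i * dist x y

/-- Self-similar zipper with maps `S 0, …, S (m-1)`, ratios `r`, vertices `z 0, …, z m`,
signature `ε` (values in `{0,1}`).  Here `S i` plays the role of the map `S_{i+1}` of the
paper, so the zipper conditions read `S i (z 0) = z (i + ε i)` and
`S i (z m) = z (i + 1 - ε i)`. -/
def IsZipper {X : Type*} [MetricSpace X] (m : ℕ)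
    (S : ℕ → X → X) (r : ℕ → ℝ) (z : ℕ → X) (ε : ℕ → ℕ) : Prop :=
  1 ≤ m ∧ IsSimilaritySystem m S r ∧ (∀ i < m, ε i ≤ 1) ∧
    ∀ i < m, S i (z 0) = z (i + ε i) ∧ S i (z m) = z (i + 1 - ε i)

/-- Linear zipper on `[0,1]`, with vertices `0 = t 0 < t 1 < … < t m = 1`. -/
def IsLinearZipper (m : ℕ) (T : ℕ → ℝ → ℝ) (r : ℕ → ℝ) (t : ℕ → ℝ) (ε : ℕ → ℕ) : Prop :=
  IsZipper m T r t ε ∧ t 0 = 0 ∧ t m = 1 ∧ ∀ i < m, t i < t (i + 1)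

/-- `K` is the attractor of the iterated function system `{S i : i < m}`. -/
def IsAttractor {X : Type*} [MetricSpace X] (m : ℕ) (S : ℕ → X → X) (K : Set X) : Prop :=
  K.Nonempty ∧ IsCompact K ∧ K = ⋃ i ∈ Finset.range m, S i '' K

/-- `g` is a structural parametrization of the zipper `S` (with vertices `z`)
relative to the linear zipper `T` (with vertices `t`). -/
def IsStructuralParam {X : Type*} [MetricSpace X] (m : ℕ) (S : ℕ → X → X)
    (T : ℕ → ℝ → ℝ) (t : ℕ → ℝ) (z : ℕ → X) (g : ℝ → X) : Prop :=
  ContinuousOn g (Icc 0 1) ∧ (∀ i ≤ m, g (t i) = z i) ∧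
    ∀ i < m, ∀ x ∈ Icc (0:ℝ) 1, S i (g x) = g (T i x)

/-- A Jordan zipper: a zipper whose attractor `γ` is a Jordan arc, i.e. some structural
parametrization is injective on `[0,1]` (hence a homeomorphism onto `γ`). -/
def IsJordanZipper {X : Type*} [MetricSpace X] (m : ℕ) (S : ℕ → X → X) (r : ℕ → ℝ)
    (z : ℕ → X) (ε : ℕ → ℕ) (γ : Set X) : Prop :=
  IsZipper m S r z ε ∧ IsAttractor m S γ ∧
    ∃ T rT t g, IsLinearZipper m T rT t ε ∧ IsStructuralParam m S T t z g ∧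
      InjOn g (Icc 0 1) ∧ g '' Icc 0 1 = γ

/-- `g` is an injective continuous parametrization of the arc `γ` by `[0,1]`. -/
def IsArcParam {X : Type*} [MetricSpace X] (γ : Set X) (g : ℝ → X) : Prop :=
  ContinuousOn g (Icc 0 1) ∧ InjOn g (Icc 0 1) ∧ g '' Icc 0 1 = γ

/-- Bounded turning with constant `M`: every subarc `γ_{xy}` (expressed via any
parametrization of the arc) has diameter at most `M‖x - y‖`. -/
def BoundedTurning {X : Type*} [MetricSpace X] (γ : Set X) (M : ℝ) : Prop :=
  0 < M ∧ ∀ g : ℝ → X, IsArcParam γ g →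
    ∀ s ∈ Icc (0:ℝ) 1, ∀ u ∈ Icc (0:ℝ) 1, diam (g '' uIcc s u) ≤ M * dist (g s) (g u)

/-- `f` agrees with the systems `S` and `S'` on `γ`: `f ∘ S i = S' i ∘ f` on `γ`. -/
def Agrees {X Y : Type*} [MetricSpace X] [MetricSpace Y] (m : ℕ)
    (S : ℕ → X → X) (S' : ℕ → Y → Y) (γ : Set X) (f : X → Y) : Prop :=
  ∀ i < m, ∀ x ∈ γ, f (S i x) = S' i (f x)

/-- `f` restricts to a homeomorphism of the compact set `γ` onto `γ'`. -/
def IsHomeoOnto {X Y : Type*} [MetricSpace X] [MetricSpace Y]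
    (γ : Set X) (γ' : Set Y) (f : X → Y) : Prop :=
  ContinuousOn f γ ∧ InjOn f γ ∧ f '' γ = γ'

/-- Composition `S_{i₁} ∘ … ∘ S_{i_k}` along a multi-index (a list). -/
def compS {X : Type*} (S : ℕ → X → X) : List ℕ → X → X
  | [] => id
  | i :: l => S i ∘ compS S l

/-- Product of the ratios along a multi-index. -/
def ratioProd (p : ℕ → ℝ) (l : List ℕ) : ℝ := (l.map p).prod

/-!
Every vertex is the image of an end vertex under one of the maps, in a way that depends only on
the signature. Hence the largest error `dist (f (z j)) (z' j)` is at most a ratio `q i < 1` times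
itself, so it vanishes and `f` carries vertices to vertices. Therefore `f` sends the pair
`(S i)^[k] (z 0)`, `(S i)^[k] (z m)` to `(S' i)^[k] (z' 0)`, `(S' i)^[k] (z' m)`, and the distances
in these pairs decay like `p i ^ k` and `q i ^ k = (p i ^ k) ^ α`, where
`α = log (q i) / log (p i)`. For `β > α` the quotient `q i ^ k / (p i ^ k) ^ β` is unbounded, which
excludes the exponent `β`.
-/

theorem exists_mul_pow_lt_mul_pow {a b D : ℝ} (ha : 0 ≤ a) (hab : a < b) (hD : 0 < D) (C : ℝ) :
    ∃ k : ℕ, C * a ^ k < D * b ^ k := by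
  have hb : 0 < b := ha.trans_lt hab
  have hlim : Filter.Tendsto (fun k : ℕ => C * (a / b) ^ k) Filter.atTop (nhds (C * 0)) :=
    (tendsto_pow_atTop_nhds_zero_of_lt_one (by positivity) ((div_lt_one hb).2 hab)).const_mul C
  have hlim_lt : C * 0 < D := by rwa [mul_zero]
  obtain ⟨k, hk⟩ := (hlim.eventually_lt_const hlim_lt).exists
  refine ⟨k, ?_⟩
  rwa [div_pow, ← mul_div_assoc, div_lt_iff₀ (pow_pos hb k)] at hk

section Similarities

variable {X : Type*} [PseudoMetricSpace X] {F : X → X} {p : ℝ}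

theorem dist_iterate_of_dist_eq_mul (hF : ∀ x y, dist (F x) (F y) = p * dist x y) (k : ℕ)
    (x y : X) : dist (F^[k] x) (F^[k] y) = p ^ k * dist x y := by
  induction k with
  | zero => simp
  | succ k ih =>
    rw [Function.iterate_succ_apply', Function.iterate_succ_apply', hF, ih, pow_succ', mul_assoc]

theorem dist_iterate_rpow (hp : 0 ≤ p) (hF : ∀ x y, dist (F x) (F y) = p * dist x y) (k : ℕ)
    (x y : X) (β : ℝ) :
    dist (F^[k] x) (F^[k] y) ^ β = (p ^ β) ^ k * dist x y ^ β := by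
  rw [dist_iterate_of_dist_eq_mul hF, Real.mul_rpow (pow_nonneg hp k) dist_nonneg,
    Real.rpow_pow_comm hp]

end Similarities

section SemiconjugateSimilarities

variable {X Y : Type*} {F : X → X} {G : Y → Y} {f : X → Y} {γ : Set X} {p q : ℝ} {x y : X}

theorem map_iterate_eq_iterate_map (hγ : MapsTo F γ γ) (hf : ∀ x ∈ γ, f (F x) = G (f x))
    (hx : x ∈ γ) (k : ℕ) : f (F^[k] x) = G^[k] (f x) := by
  induction k generalizing x with
  | zero => rfl
  | succ k ih => rw [Function.iterate_succ_apply, ih (hγ hx), hf x hx, Function.iterate_succ_apply]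

variable [PseudoMetricSpace Y]

theorem dist_map_iterate (hγ : MapsTo F γ γ) (hf : ∀ x ∈ γ, f (F x) = G (f x))
    (hG : ∀ x y, dist (G x) (G y) = q * dist x y) (hx : x ∈ γ) (hy : y ∈ γ) (k : ℕ) :
    dist (f (F^[k] x)) (f (F^[k] y)) = q ^ k * dist (f x) (f y) := by
  rw [map_iterate_eq_iterate_map hγ hf hx, map_iterate_eq_iterate_map hγ hf hy,
    dist_iterate_of_dist_eq_mul hG]

variable [PseudoMetricSpace X]

theorem dist_map_iterate_eq_mul_dist_rpow (hp : 0 ≤ p)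
    (hF : ∀ x y, dist (F x) (F y) = p * dist x y) (hγ : MapsTo F γ γ)
    (hf : ∀ x ∈ γ, f (F x) = G (f x)) {α : ℝ}
    (hG : ∀ x y, dist (G x) (G y) = p ^ α * dist x y) (hx : x ∈ γ) (hy : y ∈ γ)
    (hxy : 0 < dist x y) (k : ℕ) :
    dist (f (F^[k] x)) (f (F^[k] y)) =
      dist (f x) (f y) / dist x y ^ α * dist (F^[k] x) (F^[k] y) ^ α := by
  have hd : dist x y ^ α ≠ 0 := (Real.rpow_pos_of_pos hxy α).ne'
  rw [dist_map_iterate hγ hf hG hx hy, dist_iterate_rpow hp hF]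
  field_simp

theorem exists_mul_dist_rpow_lt_dist_map_iterate (hp : 0 ≤ p)
    (hF : ∀ x y, dist (F x) (F y) = p * dist x y) (hγ : MapsTo F γ γ)
    (hf : ∀ x ∈ γ, f (F x) = G (f x)) (hG : ∀ x y, dist (G x) (G y) = q * dist x y)
    (hx : x ∈ γ) (hy : y ∈ γ) (hfxy : 0 < dist (f x) (f y)) {β : ℝ} (hβ : p ^ β < q) (C : ℝ) :
    ∃ k : ℕ, C * dist (F^[k] x) (F^[k] y) ^ β < dist (f (F^[k] x)) (f (F^[k] y)) := by
  obtain ⟨k, hk⟩ :=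
    exists_mul_pow_lt_mul_pow (Real.rpow_nonneg hp β) hβ hfxy (C * dist x y ^ β)
  refine ⟨k, ?_⟩
  rw [dist_iterate_rpow hp hF, dist_map_iterate hγ hf hG hx hy]
  linarith

end SemiconjugateSimilarities

section Zippers

variable {X Y : Type*} [MetricSpace X] [MetricSpace Y] {m : ℕ} {S : ℕ → X → X} {S' : ℕ → Y → Y}
  {p q : ℕ → ℝ} {z : ℕ → X} {z' : ℕ → Y} {ε : ℕ → ℕ} {γ : Set X} {f : X → Y}

theorem IsZipper.exists_vertex_eq_image (hS : IsZipper m S p z ε) (hS' : IsZipper m S' q z' ε)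
    {j : ℕ} (hj : j ≤ m) :
    ∃ i < m, ∃ a, (a = 0 ∨ a = m) ∧ S i (z a) = z j ∧ S' i (z' a) = z' j := by
  obtain ⟨hm, -, hε, hz⟩ := hS
  obtain ⟨-, -, -, hz'⟩ := hS'
  obtain ⟨i, hi, hij⟩ : ∃ i < m, j = i + ε i ∨ j = i + 1 - ε i := by
    rcases j with _ | i
    · have := hε 0 hm
      exact ⟨0, hm, by lia⟩
    · have := hε i hj
      exact ⟨i, hj, by lia⟩
  rcases hij with rfl | rfl
  · exact ⟨i, hi, 0, .inl rfl, (hz i hi).1, (hz' i hi).1⟩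
  · exact ⟨i, hi, m, .inr rfl, (hz i hi).2, (hz' i hi).2⟩

theorem Agrees.map_vertex (hf : Agrees m S S' γ f) (hS : IsZipper m S p z ε)
    (hS' : IsZipper m S' q z' ε) (h0 : z 0 ∈ γ) (hm : z m ∈ γ) {j : ℕ} (hj : j ≤ m) :
    f (z j) = z' j := by
  obtain ⟨l, hl, hmax⟩ := (Finset.Iic m).exists_max_image (fun j => dist (f (z j)) (z' j))
    Finset.nonempty_Iic
  simp only [Finset.mem_Iic] at hl hmax
  obtain ⟨i, hi, a, ha, hza, hza'⟩ := hS.exists_vertex_eq_image hS' hl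
  have haγ : z a ∈ γ := by rcases ha with rfl | rfl <;> assumption
  have ham : a ≤ m := by lia
  obtain ⟨hq0, hq1, hdist⟩ := hS'.2.1 i hi
  have hcontract : dist (f (z l)) (z' l) ≤ q i * dist (f (z l)) (z' l) := calc
    dist (f (z l)) (z' l) = q i * dist (f (z a)) (z' a) := by
      rw [← hza, ← hza', hf i hi _ haγ, hdist]
    _ ≤ q i * dist (f (z l)) (z' l) := by gcongr; exact hmax a ham
  have hl_nonpos : dist (f (z l)) (z' l) ≤ 0 := by nlinarith
  exact dist_le_zero.1 ((hmax j hj).trans hl_nonpos)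

theorem IsAttractor.mapsTo (hγ : IsAttractor m S γ) {i : ℕ} (hi : i < m) : MapsTo (S i) γ γ := by
  intro x hx
  rw [hγ.2.2]
  exact mem_biUnion (Finset.mem_range.2 hi) (mem_image_of_mem _ hx)

theorem IsJordanZipper.endpoints_mem (hS : IsJordanZipper m S p z ε γ) : z 0 ∈ γ ∧ z m ∈ γ := by
  obtain ⟨-, -, T, rT, t, g, ⟨-, ht0, htm, -⟩, ⟨-, hgt, -⟩, -, rfl⟩ := hS
  rw [← hgt 0 m.zero_le, ← hgt m le_rfl, ht0, htm]
  exact ⟨mem_image_of_mem g unitInterval.zero_mem, mem_image_of_mem g unitInterval.one_mem⟩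

theorem IsJordanZipper.endpoints_ne (hS : IsJordanZipper m S p z ε γ) : z 0 ≠ z m := by
  obtain ⟨-, -, T, rT, t, g, ⟨-, ht0, htm, -⟩, ⟨-, hgt, -⟩, hinj, -⟩ := hS
  rw [← hgt 0 m.zero_le, ← hgt m le_rfl, ht0, htm]
  exact hinj.ne unitInterval.zero_mem unitInterval.one_mem zero_ne_one

theorem holder_exponent_sharp_general (hS : IsZipper m S p z ε) (hS' : IsZipper m S' q z' ε)
    (h0 : z 0 ∈ γ) (hm : z m ∈ γ) (hz' : z' 0 ≠ z' m) (hf : Agrees m S S' γ f) {i : ℕ}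
    (hi : i < m) (hγ : MapsTo (S i) γ γ) {α : ℝ} (hα : α = Real.log (q i) / Real.log (p i)) :
    (∀ k : ℕ, dist (f ((S i)^[k] (z 0))) (f ((S i)^[k] (z m))) =
        dist (z' m) (z' 0) / dist (z m) (z 0) ^ α *
          dist ((S i)^[k] (z 0)) ((S i)^[k] (z m)) ^ α) ∧
      ∀ β : ℝ, α < β →
        ¬ ∃ C > (0:ℝ), ∀ x ∈ γ, ∀ y ∈ γ, dist (f x) (f y) ≤ C * dist x y ^ β := by
  obtain ⟨hp0, hp1, hSi⟩ := hS.2.1 i hi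
  obtain ⟨hq0, -, hSi'⟩ := hS'.2.1 i hi
  have hpq : p i ^ α = q i := by rw [hα, Real.log_div_log, Real.rpow_logb hp0 hp1.ne hq0]
  have hf0 : f (z 0) = z' 0 := hf.map_vertex hS hS' h0 hm m.zero_le
  have hfm : f (z m) = z' m := hf.map_vertex hS hS' h0 hm le_rfl
  have hz : z 0 ≠ z m := fun h => hz' (by rw [← hf0, ← hfm, h])
  refine ⟨fun k => ?_, ?_⟩
  · rw [dist_comm (z' m), dist_comm (z m), ← hf0, ← hfm]
    exact dist_map_iterate_eq_mul_dist_rpow hp0.le hSi hγ (hf i hi) (hpq ▸ hSi') h0 hm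
      (dist_pos.2 hz) k
  · rintro β hβ ⟨C, -, hC⟩
    have hpβ : p i ^ β < q i := hpq ▸ Real.rpow_lt_rpow_of_exponent_gt hp0 hp1 hβ
    obtain ⟨k, hk⟩ := exists_mul_dist_rpow_lt_dist_map_iterate hp0.le hSi hγ (hf i hi) hSi' h0 hm
      (dist_pos.2 (by rwa [hf0, hfm])) hpβ C
    exact hk.not_ge (hC _ (hγ.iterate k h0) _ (hγ.iterate k hm))

end Zippers

/-- if `α = log q_i / log p_i` realizes the minimum, then along the points
`x_k = S_i^k(z_0)`, `y_k = S_i^k(z_m)` the Hölder inequality for `f` is an equality with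
constant `M₀ = ‖z'_m - z'_0‖ / ‖z_m - z_0‖^α`; in particular `α` is the optimal Hölder
exponent of `f`. -/
theorem holder_exponent_sharp {n : ℕ} (m : ℕ)
    (S S' : ℕ → EuclideanSpace ℝ (Fin n) → EuclideanSpace ℝ (Fin n)) (p q : ℕ → ℝ)
    (z z' : ℕ → EuclideanSpace ℝ (Fin n)) (ε : ℕ → ℕ)
    (γ γ' : Set (EuclideanSpace ℝ (Fin n)))
    (hS : IsJordanZipper m S p z ε γ) (hS' : IsJordanZipper m S' q z' ε γ')
    (f : EuclideanSpace ℝ (Fin n) → EuclideanSpace ℝ (Fin n))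
    (hf : IsHomeoOnto γ γ' f) (hfa : Agrees m S S' γ f)
    (hm : 0 < m) (α : ℝ)
    (hα : α = (Finset.range m).inf' (Finset.nonempty_range_iff.mpr hm.ne')
      (fun j => min (Real.log (p j) / Real.log (q j)) (Real.log (q j) / Real.log (p j))))
    (i : ℕ) (hi : i < m) (hαi : α = Real.log (q i) / Real.log (p i)) :
    (∀ k : ℕ, dist (f ((S i)^[k] (z 0))) (f ((S i)^[k] (z m))) =
        dist (z' m) (z' 0) / dist (z m) (z 0) ^ α *
          dist ((S i)^[k] (z 0)) ((S i)^[k] (z m)) ^ α) ∧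
      ∀ β : ℝ, α < β →
        ¬ ∃ C > (0:ℝ), ∀ x ∈ γ, ∀ y ∈ γ, dist (f x) (f y) ≤ C * dist x y ^ β :=
  holder_exponent_sharp_general hS.1 hS'.1 hS.endpoints_mem.1 hS.endpoints_mem.2
    hS'.endpoints_ne hfa hi (hS.2.1.mapsTo hi) hαi
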